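/- Let ε : ℕ → ZMod 2 satisfy the Adem constraints with ε(2) = 0 and ε(3) = 1. Then ε takes the same value at all odd natural numbers that are not of the form 2^k − 1: for all odd x, y such that x + 1 and y + 1 are not powers of 2, one has ε(x) = ε(y). -/

import Mathlib

/-- `E ε s d` is the sum over all `s`-tuples of naturals summing to `d` of the
products of the values of `ε`, in `ZMod 2`. -/
def E (ε : ℕ → ZMod 2) (s d : ℕ) : ZMod 2 :=
  ∑ f ∈ Finset.Nat.antidiagonalTuple s d, ∏ j, ε (f j)

/-- `ε` satisfies the Adem constraints encoding the Adem relations among the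
Dyer-Lashof operations on `F₂[u]` with `Q^{2r} u = ε r • u^{r+1}`. -/
def AdemConstraints (ε : ℕ → ZMod 2) : Prop :=
  ε 0 = 0 ∧ ε 1 = 1 ∧ ∀ s r : ℕ, r > 2 * s →
    ε s * E ε (s + 1) r =
      ∑ i ∈ (Finset.Icc (s + 1) (r - s - 1)).filter (fun i => r ≤ 2 * i),
        ((Nat.choose (i - s - 1) (2 * i - r) : ZMod 2) * ε i * E ε (i + 1) (r + s - i))

/-!
Write `e(x) = ∑ ε(i) xⁱ`, so that `E ε s d` is the coefficient of `x^d` in `e(x)^s`. Over `F₂` one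
has `e(x)² = e(x²)`, and `E ε s d` vanishes for `d < s` because `x` divides `e(x)`. The latter
confines the right-hand side of an Adem constraint to the indices `r ≤ 2i < r + s`, a window whose
length depends on `s` alone. The constraints with `s = 2, 3, 5` give in turn

* `ε(2n) = 0`,
* `ε(4n+3) = ε(2n+1)`,
* `ε(5) ε(n+2) = ε(4n+9) + (n+1) ε(4n+11)`.

By the last two, `ε(5) ε(x) = ε(5)` for all odd `x`. Hence `ε(4n+5) = ε(5)`, and halving `x + 1` as
long as `x` is `3` modulo `4` brings any odd `x` either to this case or to `x = 1`.
-/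

open Finset PowerSeries

theorem powerSeries_pow_eq_expand {p : ℕ} [Fact p.Prime] (f : PowerSeries (ZMod p)) :
    f ^ p = expand p (NeZero.ne p) f := by
  have h := MvPowerSeries.map_frobenius_expand p (NeZero.ne p) (f := f)
  rw [ZMod.frobenius_zmod] at h
  exact h.symm.trans (by simp [PowerSeries.expand])

theorem sum_antidiagonalTuple_prod_eq_coeff_pow {R : Type*} [CommSemiring R] (f : ℕ → R)
    (s d : ℕ) :
    ∑ g ∈ Nat.antidiagonalTuple s d, ∏ j, f (g j) = coeff d (PowerSeries.mk f ^ s) := by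
  rw [← Fintype.card_fin s, ← card_univ, ← prod_const, coeff_prod, card_univ, Fintype.card_fin]
  exact sum_nbij' Finsupp.equivFunOnFinite.symm (⇑)
    (by simp [Nat.mem_antidiagonalTuple]) (by simp [Nat.mem_antidiagonalTuple])
    (by simp) (by simp) (by simp)

theorem zmod_cast_choose_mul {p : ℕ} [Fact p.Prime] (n k : ℕ) :
    (n.choose (p * k) : ZMod p) = (n / p).choose k := by
  rw [ZMod.natCast_eq_natCast_iff]
  simpa [(Fact.out : p.Prime).pos] using
    Choose.choose_modEq_choose_mod_mul_choose_div_nat (p := p) (n := n) (k := p * k)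

section E

variable (ε : ℕ → ZMod 2)

theorem E_eq_coeff (s d : ℕ) : E ε s d = coeff d (PowerSeries.mk ε ^ s) :=
  sum_antidiagonalTuple_prod_eq_coeff_pow ε s d

theorem E_zero_right (s : ℕ) : E ε s 0 = ε 0 ^ s := by
  simp [E, Nat.antidiagonalTuple_zero_right]

theorem E_one_left (d : ℕ) : E ε 1 d = ε d := by
  simp [E_eq_coeff]

theorem E_succ_left (s d : ℕ) :
    E ε (s + 1) d = ∑ ab ∈ antidiagonal d, E ε s ab.1 * ε ab.2 := by
  simp only [E_eq_coeff, pow_succ, coeff_mul, coeff_mk]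

theorem E_two_mul_left (s d : ℕ) :
    E ε (2 * s) d = if 2 ∣ d then E ε s (d / 2) else 0 := by
  simp only [E_eq_coeff, pow_mul, powerSeries_pow_eq_expand, ← map_pow, coeff_expand]

theorem E_two_mul_two_mul (s d : ℕ) : E ε (2 * s) (2 * d) = E ε s d := by
  simp [E_two_mul_left]

theorem E_two_mul_add_one (s d : ℕ) :
    E ε (2 * s + 1) (2 * d + 1) = ∑ ab ∈ antidiagonal d, E ε s ab.1 * ε (2 * ab.2 + 1) := by
  rw [E_succ_left]
  symm
  refine sum_of_injOn (fun ab ↦ (2 * ab.1, 2 * ab.2 + 1)) ?_ ?_ ?_ ?_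
  · intro ab _ cd _ h
    grind
  · intro ab h
    simp only [mem_coe, HasAntidiagonal.mem_antidiagonal] at h ⊢
    omega
  · rintro ⟨a, b⟩ hab h_not_image
    rw [E_two_mul_left, if_neg, zero_mul]
    rintro ⟨c, rfl⟩
    rw [HasAntidiagonal.mem_antidiagonal] at hab
    exact h_not_image ⟨(c, d - c), by grind [HasAntidiagonal.mem_antidiagonal]⟩
  · intro ab _
    rw [E_two_mul_two_mul]

variable {ε}

theorem E_eq_zero_of_lt (h0 : ε 0 = 0) {s d : ℕ} (hd : d < s) : E ε s d = 0 := by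
  have X_dvd : X ∣ PowerSeries.mk ε := X_dvd_iff.2 (by simpa)
  rw [E_eq_coeff]
  exact X_pow_dvd_iff.1 (pow_dvd_pow_of_dvd X_dvd s) d hd

theorem E_self_add (h0 : ε 0 = 0) (s d : ℕ) : E ε s (s + d) = E (fun n ↦ ε (n + 1)) s d := by
  have mk_eq : PowerSeries.mk ε = X * PowerSeries.mk fun n ↦ ε (n + 1) := by
    ext n
    cases n <;> simp [h0, coeff_succ_X_mul]
  rw [E_eq_coeff, E_eq_coeff, mk_eq, mul_pow, add_comm, coeff_X_pow_mul]

theorem E_self (h0 : ε 0 = 0) (h1 : ε 1 = 1) (s : ℕ) : E ε s s = 1 := by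
  simpa [E_zero_right, h1] using E_self_add h0 s 0

theorem E_self_add_two (h0 : ε 0 = 0) (h1 : ε 1 = 1) (h2 : ε 2 = 0) (s : ℕ) :
    E ε s (s + 2) = s * ε 3 := by
  rw [E_self_add h0]
  induction s with
  | zero => simp [E_eq_coeff, coeff_one]
  | succ s ih =>
    rw [E_succ_left, Nat.sum_antidiagonal_eq_sum_range_succ_mk]
    simp [sum_range_succ, ih, E_zero_right, h1, h2, add_mul, add_comm]

end E

namespace AdemConstraints

variable {ε : ℕ → ZMod 2}

/-- The terms with `r + s ≤ 2i` vanish because then `E ε (i + 1)` is taken in a degree below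
`i + 1`, and those with `r - s ≤ i` because the binomial coefficient does. -/
theorem eq_sum_Ico (hε : AdemConstraints ε) {s r : ℕ} (hr : 2 * s < r) :
    ε s * E ε (s + 1) r = ∑ i ∈ Ico ((r + 1) / 2) ((r + s + 1) / 2),
      ((i - s - 1).choose (2 * i - r) : ZMod 2) * ε i * E ε (i + 1) (r + s - i) := by
  rw [hε.2.2 s r hr]
  refine sum_congr_of_eq_on_inter ?_ ?_ fun _ _ _ ↦ rfl
  · intro i hi hi'
    simp only [mem_filter, mem_Icc, mem_Ico] at hi hi'
    rw [E_eq_zero_of_lt hε.1 (by omega), mul_zero]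
  · intro i hi hi'
    simp only [mem_filter, mem_Icc, mem_Ico] at hi hi'
    rw [Nat.choose_eq_zero_of_lt (by omega), Nat.cast_zero, zero_mul, zero_mul]

theorem eq_sum_range (hε : AdemConstraints ε) (s n : ℕ) :
    ε s * E ε (s + 1) (2 * (n + s + 1)) = ∑ j ∈ range ((s + 1) / 2),
      ((n + j).choose (2 * j) : ZMod 2) * ε (n + s + 1 + j) *
        E ε (n + s + j + 2) (n + 2 * s + 1 - j) := by
  rw [hε.eq_sum_Ico (by omega), sum_Ico_eq_sum_range]
  refine sum_congr (by congr 1; omega) fun j _ ↦ ?_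
  rw [show (2 * (n + s + 1) + 1) / 2 = n + s + 1 by omega,
    show n + s + 1 + j - s - 1 = n + j by omega,
    show 2 * (n + s + 1 + j) - 2 * (n + s + 1) = 2 * j by omega,
    show n + s + 1 + j + 1 = n + s + j + 2 by omega,
    show 2 * (n + s + 1) + s - (n + s + 1 + j) = n + 2 * s + 1 - j by omega]

theorem eq_zero_of_even (hε : AdemConstraints ε) (h2 : ε 2 = 0) {n : ℕ} (hn : Even n) :
    ε n = 0 := by
  obtain ⟨k, rfl⟩ := hn.two_dvd
  match k with
  | 0 => exact hε.1
  | 1 => exact h2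
  | k + 2 =>
    have window : Ico ((4 * k + 7 + 1) / 2) ((4 * k + 7 + 2 + 1) / 2) = {2 * (k + 2)} := by grind
    have h : ε 2 * E ε 3 (4 * k + 7) = ((2 * k + 1).choose 1 : ZMod 2) * ε (2 * (k + 2)) *
        E ε (2 * (k + 2) + 1) (2 * (k + 2) + 1) := by
      rw [hε.eq_sum_Ico (by omega), window, sum_singleton]
      congr 4 <;> omega
    simpa [h2, E_self hε.1 hε.2.1, CharTwo.two_eq_zero] using h.symm

theorem apply_two_mul_add_one (hε : AdemConstraints ε) (h2 : ε 2 = 0) (h3 : ε 3 = 1) {m : ℕ}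
    (hm : Odd m) : ε (2 * m + 1) = ε m := by
  obtain ⟨_ | k, rfl⟩ := hm
  · exact h3.trans hε.2.1.symm
  have h := hε.eq_sum_range 3 (4 * k + 2)
  have left : E ε 4 (2 * (4 * k + 6)) = ε (2 * k + 3) := by
    rw [show 2 * (4 * k + 6) = 2 * (2 * (2 * k + 3)) by ring, show 4 = 2 * (2 * 1) from rfl,
      E_two_mul_two_mul, E_two_mul_two_mul, E_one_left]
  have even_eq_zero : ε (4 * k + 6) = 0 := hε.eq_zero_of_even h2 (by grind)
  have choose_eq : ((4 * k + 3).choose (2 * 1) : ZMod 2) = 1 := by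
    rw [zmod_cast_choose_mul, show (4 * k + 3) / 2 = 2 * k + 1 by omega]
    simp [CharTwo.two_eq_zero]
  have reduced : ε (2 * k + 3) = ε (4 * k + 7) := by
    simpa [sum_range_succ, add_assoc, h3, left, even_eq_zero, choose_eq, E_self hε.1 hε.2.1]
      using h
  rw [show 2 * (2 * (k + 1) + 1) + 1 = 4 * k + 7 by ring, ← reduced]
  rfl

/-- In `e³ = e(x²) e(x)` a term `ε(a) ε(2b + 1)` of degree `4n + 1` has `a + b = 2n`, and vanishes
unless `a`, and hence `b`, is odd; it is then the term `ε(a) ε(b)` of `E ε 2 (2n) = ε(n)`. -/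
theorem E_three_four_mul_add_one (hε : AdemConstraints ε) (h2 : ε 2 = 0) (h3 : ε 3 = 1) (n : ℕ) :
    E ε 3 (4 * n + 1) = ε n := by
  calc E ε 3 (4 * n + 1)
    _ = ∑ ab ∈ antidiagonal (2 * n), E ε 1 ab.1 * ε (2 * ab.2 + 1) := by
      rw [← E_two_mul_add_one]; congr 1; ring
    _ = ∑ ab ∈ antidiagonal (2 * n), E ε 1 ab.1 * ε ab.2 := by
      refine sum_congr rfl fun ⟨a, b⟩ hab ↦ ?_
      rw [HasAntidiagonal.mem_antidiagonal] at hab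
      rcases Nat.even_or_odd a with ha | ha
      · simp [E_one_left, hε.eq_zero_of_even h2 ha]
      · rw [hε.apply_two_mul_add_one h2 h3 (by grind)]
    _ = E ε (2 * 1) (2 * n) := (E_succ_left ε 1 (2 * n)).symm
    _ = ε n := by rw [E_two_mul_two_mul, E_one_left]

theorem apply_five_mul_apply_add_two (hε : AdemConstraints ε) (h2 : ε 2 = 0) (h3 : ε 3 = 1)
    (n : ℕ) : ε 5 * ε (n + 2) = ε (4 * n + 9) + (n + 1) * ε (4 * n + 11) := by
  have h := hε.eq_sum_range 5 (4 * n + 3)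
  have left : E ε 6 (2 * (4 * n + 9)) = ε (n + 2) := by
    rw [show 6 = 2 * 3 from rfl, E_two_mul_two_mul, ← hε.E_three_four_mul_add_one h2 h3]
    rfl
  have first : E ε (4 * n + 10) (4 * n + 14) = 1 := by
    rw [show 4 * n + 10 = 2 * (2 * n + 5) by ring, show 4 * n + 14 = 2 * (2 * n + 5 + 2) by ring,
      E_two_mul_two_mul, E_self_add_two hε.1 hε.2.1 h2, h3, mul_one]
    exact ZMod.natCast_eq_one_iff_odd.2 (by grind)
  have even_eq_zero : ε (4 * n + 10) = 0 := hε.eq_zero_of_even h2 (by grind)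
  have choose_eq : ((4 * n + 5).choose 4 : ZMod 2) = n + 1 := by
    rw [show 4 = 2 * (2 * 1) from rfl, zmod_cast_choose_mul, zmod_cast_choose_mul,
      show (2 * (2 * 1) * n + 5) / 2 / 2 = n + 1 by omega, Nat.choose_one_right, Nat.cast_succ]
  simpa [sum_range_succ, add_assoc, left, first, even_eq_zero, choose_eq, E_self hε.1 hε.2.1]
    using h

theorem apply_eight_mul_add_five (hε : AdemConstraints ε) (h2 : ε 2 = 0) (h3 : ε 3 = 1) (n : ℕ) :
    ε (8 * n + 5) = ε 5 * ε (2 * n + 1) := by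
  obtain _ | k := n
  · simp [hε.2.1]
  have coeff_eq : ((2 * k + 1 : ℕ) + 1 : ZMod 2) = 0 := by
    simp [one_add_one_eq_two, CharTwo.two_eq_zero]
  rw [show 8 * (k + 1) + 5 = 4 * (2 * k + 1) + 9 by ring,
    show 2 * (k + 1) + 1 = 2 * k + 1 + 2 by ring, hε.apply_five_mul_apply_add_two h2 h3, coeff_eq,
    zero_mul, add_zero]

theorem apply_eight_mul_add_nine (hε : AdemConstraints ε) (h2 : ε 2 = 0) (h3 : ε 3 = 1) (n : ℕ) :
    ε (8 * n + 9) = ε (4 * n + 5) := by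
  have h := hε.apply_five_mul_apply_add_two h2 h3 (2 * n)
  have double : ε (8 * n + 11) = ε (4 * n + 5) := by
    rw [← hε.apply_two_mul_add_one h2 h3 (m := 4 * n + 5) (by grind)]
    congr 1; ring
  rw [hε.eq_zero_of_even h2 (by grind : Even (2 * n + 2)), mul_zero,
    show 4 * (2 * n) = 8 * n by ring, double] at h
  simpa [CharTwo.two_eq_zero, CharTwo.add_eq_zero] using h.symm

theorem apply_five_mul_apply_of_odd (hε : AdemConstraints ε) (h2 : ε 2 = 0) (h3 : ε 3 = 1) {x : ℕ}
    (hx : Odd x) : ε 5 * ε x = ε 5 := by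
  induction x using Nat.strong_induction_on with
  | _ x ih =>
    obtain rfl | hmod | hmod | ⟨hmod, hle⟩ :
        x = 1 ∨ x % 4 = 3 ∨ x % 8 = 5 ∨ x % 8 = 1 ∧ 9 ≤ x := by grind
    · rw [hε.2.1, mul_one]
    · obtain ⟨n, rfl⟩ : ∃ n, x = 4 * n + 3 := ⟨x / 4, by omega⟩
      rw [show 4 * n + 3 = 2 * (2 * n + 1) + 1 by ring,
        hε.apply_two_mul_add_one h2 h3 (by simp), ih _ (by omega) (by simp)]
    · obtain ⟨n, rfl⟩ : ∃ n, x = 8 * n + 5 := ⟨x / 8, by omega⟩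
      rw [hε.apply_eight_mul_add_five h2 h3, ih _ (by omega) (by simp), ← sq, ZMod.pow_card]
    · obtain ⟨n, rfl⟩ : ∃ n, x = 8 * n + 9 := ⟨x / 8 - 1, by omega⟩
      rw [hε.apply_eight_mul_add_nine h2 h3, ih _ (by omega) (by grind)]

theorem apply_four_mul_add_five (hε : AdemConstraints ε) (h2 : ε 2 = 0) (h3 : ε 3 = 1) (n : ℕ) :
    ε (4 * n + 5) = ε 5 := by
  induction n using Nat.strong_induction_on with
  | _ n ih =>
    obtain ⟨m, rfl | rfl⟩ := n.even_or_odd'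
    · rw [show 4 * (2 * m) = 8 * m by ring, hε.apply_eight_mul_add_five h2 h3,
        hε.apply_five_mul_apply_of_odd h2 h3 (by simp)]
    · rw [show 4 * (2 * m + 1) + 5 = 8 * m + 9 by ring, hε.apply_eight_mul_add_nine h2 h3,
        ih m (by omega)]

theorem apply_eq_apply_five (hε : AdemConstraints ε) (h2 : ε 2 = 0) (h3 : ε 3 = 1) {x : ℕ}
    (hx : Odd x) (hpow : ¬ ∃ k : ℕ, x + 1 = 2 ^ k) : ε x = ε 5 := by
  induction x using Nat.strong_induction_on with
  | _ x ih =>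
    obtain rfl | hmod | ⟨hmod, hle⟩ : x = 1 ∨ x % 4 = 3 ∨ x % 4 = 1 ∧ 5 ≤ x := by grind
    · exact absurd ⟨1, rfl⟩ hpow
    · obtain ⟨n, rfl⟩ : ∃ n, x = 2 * (2 * n + 1) + 1 := ⟨x / 4, by omega⟩
      rw [hε.apply_two_mul_add_one h2 h3 (by simp)]
      refine ih _ (by omega) (by simp) ?_
      rintro ⟨k, hk⟩
      exact hpow ⟨k + 1, by rw [pow_succ, ← hk]; ring⟩
    · obtain ⟨n, rfl⟩ : ∃ n, x = 4 * n + 5 := ⟨x / 4 - 1, by omega⟩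
      exact hε.apply_four_mul_add_five h2 h3 n

end AdemConstraints

theorem stmt_6 (ε : ℕ → ZMod 2) (hε : AdemConstraints ε) (h2 : ε 2 = 0)
    (h3 : ε 3 = 1) :
    ∀ x y : ℕ, Odd x → Odd y → (¬ ∃ k : ℕ, x + 1 = 2 ^ k) →
      (¬ ∃ k : ℕ, y + 1 = 2 ^ k) → ε x = ε y := by
  intro x y hx hy hx_pow hy_pow
  rw [hε.apply_eq_apply_five h2 h3 hx hx_pow, hε.apply_eq_apply_five h2 h3 hy hy_pow]
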